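/- Let β ≥ 1 and let L be a nonempty finite set of links with a power assignment under which L is 3^{-α}-feasible, and let u be a link with ℓ_u ≤ ℓ_x for every x ∈ L. Let v ∈ L be a link minimizing d(r_u, r_x) over x ∈ L and set D := d(r_u, r_v), and let w ∈ L be a link minimizing d(s_x, r_u) over x ∈ L. Then every link x ∈ L with x ≠ w satisfies d(s_x, r_u) ≥ D/2. -/

import Mathlib

open Finset MeasureTheory
open scoped Classical

/-- A wireless link: an ordered sender–receiver pair of points in a metric space. -/
structure Link (X : Type*) where
  sender : X
  receiver : X

variable {X : Type*} [MetricSpace X]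

/-- The length `ℓ_v` of a link. -/
noncomputable def linkLen (v : Link X) : ℝ := dist v.sender v.receiver

/-- The asymmetric distance `d_{wv}` from the sender of `w` to the receiver of `v`. -/
noncomputable def linkDist (w v : Link X) : ℝ := dist w.sender v.receiver

/-- The constant `c_v = β/(1 - β N ℓ_v^α / P_v)`. -/
noncomputable def cConst (α β N : ℝ) (pw : Link X → ℝ) (v : Link X) : ℝ :=
  β / (1 - β * N * linkLen v ^ α / pw v)

/-- The (thresholded) affectance `a_w(v)` of link `w` on link `v`. -/
noncomputable def aff (α β N : ℝ) (pw : Link X → ℝ) (w v : Link X) : ℝ :=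
  if w = v then 0
  else min 1 (cConst α β N pw v * (pw w / pw v) * (linkLen v / linkDist w v) ^ α)

/-- `a_S(v) = Σ_{w ∈ S} a_w(v)`. -/
noncomputable def affIn (α β N : ℝ) (pw : Link X → ℝ) (S : Finset (Link X)) (v : Link X) : ℝ :=
  ∑ w ∈ S, aff α β N pw w v

/-- `a_v(S) = Σ_{w ∈ S} a_v(w)`. -/
noncomputable def affOut (α β N : ℝ) (pw : Link X → ℝ) (v : Link X) (S : Finset (Link X)) : ℝ :=
  ∑ w ∈ S, aff α β N pw v w

/-!
Multiplying the bounds on the mutual interference of two links cancels their powers, so feasibility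
forces `t² ℓ_v ℓ_w ≤ d_{wv} d_{vw}` under every power assignment. If moreover both receivers are at
distance at least `D` from a point `p` while both senders are at distance less than
`(t - 1) / (t + 1) * D` from `p`, then both links are long compared with the distance between their
senders, and the triangle inequality gives `d_{wv} < t ℓ_v` and `d_{vw} < t ℓ_w`, a contradiction.
The value `t = 3` yields the radius `D / 2`.
-/

lemma linkLen_nonneg (v : Link X) : 0 ≤ linkLen v := dist_nonneg

lemma linkDist_nonneg (w v : Link X) : 0 ≤ linkDist w v := dist_nonneg

/-- The relative interference of `w` on `v`: the power received from `w` at the receiver of `v`,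
divided by the power received there from the sender of `v`. It is the affectance of `w` on `v`
without its noise factor `c_v` and its threshold. -/
noncomputable def relInterference (α : ℝ) (pw : Link X → ℝ) (w v : Link X) : ℝ :=
  pw w / pw v * (linkLen v / linkDist w v) ^ α

/-- The set `L` is `γ`-feasible: the total affectance of `L` on each of its links is at most `γ`. -/
def IsFeasible (α β N : ℝ) (pw : Link X → ℝ) (γ : ℝ) (L : Finset (Link X)) : Prop :=
  ∀ v ∈ L, affIn α β N pw L v ≤ γ

section Affectance

variable {α β N γ : ℝ} {pw : Link X → ℝ} {L : Finset (Link X)} {v w : Link X}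

lemma pos_of_noise_lt (hβ : 0 ≤ β) (hN : 0 ≤ N) (hnoise : β * N * linkLen v ^ α < pw v) :
    0 < pw v :=
  (mul_nonneg (mul_nonneg hβ hN) (Real.rpow_nonneg (linkLen_nonneg v) α)).trans_lt hnoise

lemma le_cConst (hβ : 0 ≤ β) (hN : 0 ≤ N) (hnoise : β * N * linkLen v ^ α < pw v) :
    β ≤ cConst α β N pw v := by
  have hpw : 0 < pw v := pos_of_noise_lt hβ hN hnoise
  have hlen := linkLen_nonneg v
  have hratio_nonneg : 0 ≤ β * N * linkLen v ^ α / pw v := by positivity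
  have hratio_lt_one : β * N * linkLen v ^ α / pw v < 1 := (div_lt_one hpw).2 hnoise
  exact le_div_self hβ (sub_pos.2 hratio_lt_one) (sub_le_self 1 hratio_nonneg)

lemma relInterference_nonneg (hw : 0 ≤ pw w) (hv : 0 ≤ pw v) : 0 ≤ relInterference α pw w v :=
  mul_nonneg (div_nonneg hw hv)
    (Real.rpow_nonneg (div_nonneg (linkLen_nonneg v) (linkDist_nonneg w v)) α)

lemma aff_of_ne (hwv : w ≠ v) :
    aff α β N pw w v = min 1 (cConst α β N pw v * relInterference α pw w v) := by
  rw [aff, if_neg hwv, relInterference, mul_assoc]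

lemma aff_nonneg (hc : 0 ≤ cConst α β N pw v) (hw : 0 ≤ pw w) (hv : 0 ≤ pw v) :
    0 ≤ aff α β N pw w v := by
  obtain rfl | hwv := eq_or_ne w v
  · simp [aff]
  · rw [aff_of_ne hwv]
    exact le_min zero_le_one (mul_nonneg hc (relInterference_nonneg hw hv))

lemma relInterference_le_of_aff_le (hwv : w ≠ v) (hc : 1 ≤ cConst α β N pw v) (hw : 0 ≤ pw w)
    (hv : 0 ≤ pw v) (hγ : γ < 1) (haff : aff α β N pw w v ≤ γ) : relInterference α pw w v ≤ γ := by
  rw [aff_of_ne hwv, min_le_iff] at haff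
  calc relInterference α pw w v
      ≤ cConst α β N pw v * relInterference α pw w v :=
        le_mul_of_one_le_left (relInterference_nonneg hw hv) hc
    _ ≤ γ := haff.resolve_left hγ.not_ge

lemma IsFeasible.relInterference_le (hL : IsFeasible α β N pw γ L) (hβ : 1 ≤ β) (hN : 0 ≤ N)
    (hnoise : ∀ x ∈ L, β * N * linkLen x ^ α < pw x) (hγ : γ < 1) (hw : w ∈ L) (hv : v ∈ L)
    (hwv : w ≠ v) : relInterference α pw w v ≤ γ := by
  have hβ₀ : 0 ≤ β := zero_le_one.trans hβ
  have hpw : ∀ x ∈ L, 0 ≤ pw x := fun x hx ↦ (pos_of_noise_lt hβ₀ hN (hnoise x hx)).le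
  have hc : 1 ≤ cConst α β N pw v := hβ.trans (le_cConst hβ₀ hN (hnoise v hv))
  have haff : aff α β N pw w v ≤ affIn α β N pw L v :=
    single_le_sum (f := fun x ↦ aff α β N pw x v)
      (fun x hx ↦ aff_nonneg (zero_le_one.trans hc) (hpw x hx) (hpw v hv)) hw
  exact relInterference_le_of_aff_le hwv hc (hpw w hw) (hpw v hv) hγ (haff.trans (hL v hv))

end Affectance

section Separation

variable {α t D : ℝ} {pw : Link X → ℝ} {v w : Link X} {p : X}

lemma relInterference_mul_relInterference_swap (hw : pw w ≠ 0) (hv : pw v ≠ 0) :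
    relInterference α pw w v * relInterference α pw v w =
      (linkLen v * linkLen w / (linkDist w v * linkDist v w)) ^ α := by
  have hpowers : pw w / pw v * (pw v / pw w) = 1 := by field_simp
  rw [relInterference, relInterference, mul_mul_mul_comm, hpowers, one_mul,
    ← Real.mul_rpow (div_nonneg (linkLen_nonneg v) (linkDist_nonneg w v))
      (div_nonneg (linkLen_nonneg w) (linkDist_nonneg v w)), div_mul_div_comm]

lemma sq_mul_linkLen_le_linkDist_mul_linkDist (hα : 0 < α) (ht : 0 < t) (hw : 0 < pw w)
    (hv : 0 < pw v) (hdwv : 0 < linkDist w v) (hdvw : 0 < linkDist v w)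
    (hwv : relInterference α pw w v ≤ t ^ (-α)) (hvw : relInterference α pw v w ≤ t ^ (-α)) :
    t ^ 2 * (linkLen v * linkLen w) ≤ linkDist w v * linkDist v w := by
  have hlen : 0 ≤ linkLen v * linkLen w := mul_nonneg (linkLen_nonneg v) (linkLen_nonneg w)
  have hpow : (linkLen v * linkLen w / (linkDist w v * linkDist v w)) ^ α ≤ ((t ^ 2)⁻¹) ^ α :=
    calc (linkLen v * linkLen w / (linkDist w v * linkDist v w)) ^ α
        = relInterference α pw w v * relInterference α pw v w :=
          (relInterference_mul_relInterference_swap hw.ne' hv.ne').symm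
      _ ≤ t ^ (-α) * t ^ (-α) :=
          mul_le_mul hwv hvw (relInterference_nonneg hv.le hw.le) (by positivity)
      _ = ((t ^ 2)⁻¹) ^ α := by
          rw [← Real.mul_rpow ht.le ht.le, ← sq, Real.rpow_neg_eq_inv_rpow]
  rwa [Real.rpow_le_rpow_iff (by positivity) (by positivity) hα,
    div_le_iff₀ (mul_pos hdwv hdvw), le_inv_mul_iff₀ (by positivity)] at hpow

lemma linkDist_lt_mul_linkLen (ht : 1 ≤ t) (hv : dist v.sender p < (t - 1) / (t + 1) * D)
    (hw : dist w.sender p < (t - 1) / (t + 1) * D) (hD : D ≤ dist p v.receiver) :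
    linkDist w v < t * linkLen v := by
  set R := (t - 1) / (t + 1) * D with hR
  have hlen : D - R ≤ linkLen v := by
    have := dist_triangle_left p v.receiver v.sender
    rw [linkLen]
    linarith
  have hradius : 2 * R = (t - 1) * (D - R) := by
    rw [hR]
    field_simp
    ring
  calc linkDist w v
      ≤ dist w.sender p + dist p v.sender + linkLen v := dist_triangle4 _ _ _ _
    _ < 2 * R + linkLen v := by rw [dist_comm p]; linarith
    _ = (t - 1) * (D - R) + linkLen v := by rw [hradius]
    _ ≤ (t - 1) * linkLen v + linkLen v := by gcongr
    _ = t * linkLen v := by ring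

lemma le_max_dist_sender (ht : 1 ≤ t)
    (hsep : t ^ 2 * (linkLen v * linkLen w) ≤ linkDist w v * linkDist v w)
    (hv : D ≤ dist p v.receiver) (hw : D ≤ dist p w.receiver) :
    (t - 1) / (t + 1) * D ≤ max (dist v.sender p) (dist w.sender p) := by
  by_contra! hclose
  obtain ⟨hvp, hwp⟩ := max_lt_iff.1 hclose
  have hprod : linkDist w v * linkDist v w < t * linkLen v * (t * linkLen w) :=
    mul_lt_mul'' (linkDist_lt_mul_linkLen ht hvp hwp hv) (linkDist_lt_mul_linkLen ht hwp hvp hw)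
      (linkDist_nonneg w v) (linkDist_nonneg v w)
  linarith

end Separation

theorem stmt_4_general {α β N t D : ℝ} {pw : Link X → ℝ} {L : Finset (Link X)} {p : X}
    {w : Link X} (hα : 0 < α) (hβ : 1 ≤ β) (hN : 0 ≤ N) (ht : 1 < t)
    (hnoise : ∀ x ∈ L, β * N * linkLen x ^ α < pw x)
    (hdist : (L : Set (Link X)).Pairwise fun y x ↦ 0 < linkDist y x)
    (hL : IsFeasible α β N pw (t ^ (-α)) L) (hD : ∀ x ∈ L, D ≤ dist p x.receiver) (hw : w ∈ L)
    (hwmin : ∀ x ∈ L, dist w.sender p ≤ dist x.sender p) :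
    ∀ x ∈ L, x ≠ w → (t - 1) / (t + 1) * D ≤ dist x.sender p := by
  intro x hx hxw
  have hpw : ∀ y ∈ L, 0 < pw y := fun y hy ↦
    pos_of_noise_lt (zero_le_one.trans hβ) hN (hnoise y hy)
  have hγ : t ^ (-α) < 1 := Real.rpow_lt_one_of_one_lt_of_neg ht (neg_neg_of_pos hα)
  have hsep : t ^ 2 * (linkLen x * linkLen w) ≤ linkDist w x * linkDist x w :=
    sq_mul_linkLen_le_linkDist_mul_linkDist hα (zero_lt_one.trans ht) (hpw w hw) (hpw x hx)
      (hdist hw hx hxw.symm) (hdist hx hw hxw)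
      (hL.relInterference_le hβ hN hnoise hγ hw hx hxw.symm)
      (hL.relInterference_le hβ hN hnoise hγ hx hw hxw)
  calc (t - 1) / (t + 1) * D
      ≤ max (dist x.sender p) (dist w.sender p) :=
        le_max_dist_sender ht.le hsep (hD x hx) (hD w hw)
    _ = dist x.sender p := max_eq_left (hwmin x hx)

/-- Let `β ≥ 1`, let `L` be a nonempty finite `3^{-α}`-feasible set of
links, and let `u` be a link with `ℓ_u ≤ ℓ_x` for every `x ∈ L`. If `v ∈ L` minimizes
`d(r_u, r_x)` over `x ∈ L`, `D := d(r_u, r_v)`, and `w ∈ L` minimizes `d(s_x, r_u)` over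
`x ∈ L`, then every `x ∈ L` with `x ≠ w` satisfies `d(s_x, r_u) ≥ D/2`. -/
theorem stmt_4 {X : Type*} [MetricSpace X] (α β N : ℝ) (pw : Link X → ℝ)
    (L : Finset (Link X)) (u v w : Link X)
    (hα : 0 < α) (hβ : 1 ≤ β) (hN : 0 ≤ N)
    (hne : L.Nonempty)
    (hlen : ∀ x ∈ insert u (↑L : Set (Link X)), 0 < linkLen x)
    (hpw : ∀ x ∈ insert u (↑L : Set (Link X)), 0 < pw x)
    (hnoise : ∀ x ∈ insert u (↑L : Set (Link X)), β * N * linkLen x ^ α < pw x)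
    (hdd : ∀ x ∈ insert u (↑L : Set (Link X)), ∀ y ∈ insert u (↑L : Set (Link X)),
      y ≠ x → 0 < linkDist y x)
    (hfeas : ∀ x ∈ L, affIn α β N pw L x ≤ (3 : ℝ) ^ (-α))
    (hushort : ∀ x ∈ L, linkLen u ≤ linkLen x)
    (hv : v ∈ L)
    (hvmin : ∀ x ∈ L, dist u.receiver v.receiver ≤ dist u.receiver x.receiver)
    (hw : w ∈ L)
    (hwmin : ∀ x ∈ L, dist w.sender u.receiver ≤ dist x.sender u.receiver) :
    ∀ x ∈ L, x ≠ w → dist u.receiver v.receiver / 2 ≤ dist x.sender u.receiver := by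
  have hgen := stmt_4_general hα hβ hN (by norm_num) (fun x hx ↦ hnoise x (.inr hx))
    (fun y hy x hx ↦ hdd x (.inr hx) y (.inr hy)) hfeas hvmin hw hwmin
  exact fun x hx hxw ↦ by linarith [hgen x hx hxw]
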